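/- Let W carry a degree assignment (d_c)_{c∈C} and a combinatorial quasi-fiber structure (g, (m_c), B) of rank r. Assume: (a) p ∤ m_c for every c ∈ C; (b) for every P ∈ B and every δ ∈ Δ_P there exists μ_δ ∈ k such that M_s(δ) = μ_δ for every s ≠ g(φ_P(δ)); (c) there exists D ∈ k with Σ_{c∈g^{-1}(s)} d_c·m_c = D in k for every s; (d) a ∈ k^r satisfies a_s ≠ 0 for every s and Σ_{s=1}^r a_s = 0; (e) for each s, the restricted combinatorics W°_s is completely p-reductive with respect to ω_a|_s. Then dim_k H¹(A*_{W,k}, ·∧ω_a) = r − 1 if μ_δ = 0 in k for every P ∈ B and every branch δ ∈ Δ_P, and dim_k H¹(A*_{W,k}, ·∧ω_a) = r − 2 otherwise. (Combinatorial form of Theorem 'p.index', main statement.) -/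

import Mathlib

/-!
In degree two, the classes `ψ^δ ∧ ψ^δ'` modulo the cyclic relations are detected by the Koszul
boundary `ψ^δ ∧ ψ^δ' ↦ ψ^δ - ψ^δ'` (`sum_mk_psiW_eq_zero_iff`). Hence `β ∧ ω_a = 0` amounts to one
resonance equation per branch, plus one equation for each component of degree divisible by `p`
(`mem_wedgeKer_iff`).

The equations at the points inside one fiber, combined with complete reductivity, make `β / ω_a`
constant on every fiber (`le_ker_of_reduction`), so `β = ω_b` for some `b` (`exists_omega_eq`).
Since `Σ a = 0`, for such `β` the equation at a branch `δ` reduces to `μ_δ · Σ b = 0` (`res_omega`)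
and the equations at infinity reduce to `D · Σ b = 0` (`sum_deg_omega`). If some `μ_δ` is nonzero,
the kernel is the hyperplane `Σ b = 0`, of dimension `r - 1`. If all `μ_δ` vanish, Bezout gives
`d_i D = 0` for all `i` (`deg_mul_eq_zero`), hence `D = 0`, and the kernel is the whole
`r`-dimensional space of the `ω_b`. Dividing by the line spanned by `ω_a` lowers the dimension by
one.
-/

open scoped Classical

/-- The weak combinatorial type of a plane projective curve. -/
structure WeakComb (p : ℕ) where
  /-- the set of irreducible components -/
  C : Type
  [fintypeC : Fintype C]
  [decEqC : DecidableEq C]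
  [nonemptyC : Nonempty C]
  /-- the set of singular points -/
  S : Type
  [fintypeS : Fintype S]
  [decEqS : DecidableEq S]
  /-- the local branches at each singular point -/
  Δ : S → Type
  [fintypeΔ : ∀ P, Fintype (Δ P)]
  [decEqΔ : ∀ P, DecidableEq (Δ P)]
  /-- each branch belongs to a component -/
  φ : ∀ P, Δ P → C
  /-- local intersection multiplicities of pairs of branches -/
  μ : ∀ P, Δ P → Δ P → ℕ
  μ_symm : ∀ P δ δ', φ P δ ≠ φ P δ' → μ P δ δ' = μ P δ' δ
  μ_pos : ∀ P δ δ', φ P δ ≠ φ P δ' → 0 < μ P δ δ'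

attribute [instance] WeakComb.fintypeC WeakComb.decEqC WeakComb.nonemptyC
attribute [instance] WeakComb.fintypeS WeakComb.decEqS WeakComb.fintypeΔ WeakComb.decEqΔ

namespace WeakComb

variable {p : ℕ} (W : WeakComb p)

/-- μ_P(δ,δ') with the convention that it vanishes on pairs of branches of the same component. -/
def muk (P : W.S) (δ δ' : W.Δ P) : ℕ :=
  if W.φ P δ = W.φ P δ' then 0 else W.μ P δ δ'

/-- μ_P(δ, j): the multiplicity of intersection of the branch δ with the component j. -/
def muC (P : W.S) (δ : W.Δ P) (j : W.C) : ℕ :=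
  ∑ δ' : W.Δ P, if W.φ P δ' = j then W.muk P δ δ' else 0

/-- A degree assignment: positive degrees satisfying the Bezout condition. -/
def IsDegree (d : W.C → ℕ) : Prop :=
  (∀ i, 0 < d i) ∧
  ∀ i j, i ≠ j →
    d i * d j = ∑ P : W.S, ∑ δ : W.Δ P, if W.φ P δ = i then W.muC P δ j else 0

/-- The basis vector σ_i of A¹ = (C → ZMod p). -/
noncomputable def sigma (i : W.C) : W.C → ZMod p := Pi.single i 1

/-- The basis vector ψ_P^δ of A_P = (Δ_P → ZMod p). -/
noncomputable def psi (P : W.S) (δ : W.Δ P) : W.Δ P → ZMod p := Pi.single δ 1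

/-- ψ_P^δ ∧ ψ_P^δ' as an element of Λ² A_P. -/
noncomputable def psiW (P : W.S) (δ δ' : W.Δ P) : ⋀[ZMod p]^2 (W.Δ P → ZMod p) :=
  ⟨ExteriorAlgebra.ιMulti (ZMod p) 2 ![W.psi P δ, W.psi P δ'],
   ExteriorAlgebra.ιMulti_range (ZMod p) 2 (Set.mem_range_self _)⟩

/-- The subspace I_P of Λ² A_P. -/
noncomputable def IP (P : W.S) : Submodule (ZMod p) (⋀[ZMod p]^2 (W.Δ P → ZMod p)) :=
  Submodule.span (ZMod p)
    ({x | ∃ δ1 δ2 δ3 : W.Δ P, x = W.psiW P δ1 δ2 + W.psiW P δ2 δ3 + W.psiW P δ3 δ1} ∪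
     {x | (∀ δ δ' : W.Δ P, W.φ P δ = W.φ P δ') ∧ ∃ δ1 δ2 : W.Δ P, x = W.psiW P δ1 δ2})

/-- The degree-two part A² = A^{2,0} ⊕ A^{2,∞} of the Combinatorial Aomoto algebra. -/
abbrev A2 (d : W.C → ℕ) : Type :=
  ((P : W.S) → (⋀[ZMod p]^2 (W.Δ P → ZMod p)) ⧸ W.IP P) ×
  ({i : W.C // p ∣ d i} → ZMod p)

/-- The wedge product A¹ × A¹ → A², extending σ_i ∧ σ_j bilinearly. -/
noncomputable def wedge (d : W.C → ℕ) (α β : W.C → ZMod p) : W.A2 d :=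
  (fun P => ∑ δ : W.Δ P, ∑ δ' : W.Δ P,
      (α (W.φ P δ) * β (W.φ P δ') * (W.muk P δ δ' : ZMod p)) •
        Submodule.Quotient.mk (W.psiW P δ δ'),
   fun i => α i.1 * (∑ j : W.C, (d j : ZMod p) * β j)
          - β i.1 * (∑ j : W.C, (d j : ZMod p) * α j))

/-- The linear map ·∧α : A¹ → A², β ↦ β ∧ α. -/
noncomputable def wedgeL (d : W.C → ℕ) (α : W.C → ZMod p) :
    (W.C → ZMod p) →ₗ[ZMod p] W.A2 d where
  toFun β := W.wedge d β α
  map_add' β γ := by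
    refine Prod.ext ?_ ?_
    · funext P
      simp only [wedge, Pi.add_apply, Prod.fst_add]
      rw [← Finset.sum_add_distrib]
      refine Finset.sum_congr rfl fun δ _ => ?_
      rw [← Finset.sum_add_distrib]
      refine Finset.sum_congr rfl fun δ' _ => ?_
      rw [← add_smul, add_mul, add_mul]
    · funext i
      simp only [wedge, Pi.add_apply, Prod.snd_add]
      rw [show (∑ x : W.C, (d x : ZMod p) * (β x + γ x))
            = (∑ x : W.C, (d x : ZMod p) * β x) + ∑ x : W.C, (d x : ZMod p) * γ x by
        rw [← Finset.sum_add_distrib]; exact Finset.sum_congr rfl fun x _ => by ring]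
      ring
  map_smul' c β := by
    refine Prod.ext ?_ ?_
    · funext P
      simp only [wedge, Pi.smul_apply, smul_eq_mul, RingHom.id_apply, Prod.smul_fst]
      rw [Finset.smul_sum]
      refine Finset.sum_congr rfl fun δ _ => ?_
      rw [Finset.smul_sum]
      refine Finset.sum_congr rfl fun δ' _ => ?_
      rw [smul_smul]
      ring_nf
    · funext i
      simp only [wedge, Pi.smul_apply, smul_eq_mul, RingHom.id_apply, Prod.smul_snd]
      rw [show (∑ x : W.C, (d x : ZMod p) * (c * β x)) = c * ∑ x : W.C, (d x : ZMod p) * β x by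
        rw [Finset.mul_sum]; exact Finset.sum_congr rfl fun x _ => by ring]
      ring

/-- The kernel of ·∧α : A¹ → A². -/
noncomputable def wedgeKer (d : W.C → ℕ) (α : W.C → ZMod p) :
    Submodule (ZMod p) (W.C → ZMod p) :=
  LinearMap.ker (W.wedgeL d α)

/-- H¹ of the Combinatorial Aomoto complex with differential ·∧α. -/
noncomputable abbrev H1 (d : W.C → ℕ) (α : W.C → ZMod p) :=
  (W.wedgeKer d α) ⧸
    (Submodule.comap (W.wedgeKer d α).subtype (Submodule.span (ZMod p) {α}))

end WeakComb

namespace WeakComb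

variable {p : ℕ} (W : WeakComb p)

/-- The resonance condition for (α,β) at the branch δ of the point P. -/
def ResCond (α β : W.C → ZMod p) (P : W.S) (δ : W.Δ P) : Prop :=
  β (W.φ P δ) * (∑ j : W.C, (W.muC P δ j : ZMod p) * α j)
    - α (W.φ P δ) * (∑ j : W.C, (W.muC P δ j : ZMod p) * β j) = 0

/-- P is a p-transversal point for the pair of components i ≠ j. -/
def PTransPoint (P : W.S) (i j : W.C) : Prop :=
  i ≠ j ∧ (∀ δ : W.Δ P, W.φ P δ = i ∨ W.φ P δ = j) ∧
  (∃ δ : W.Δ P, W.φ P δ = i) ∧ (∃ δ : W.Δ P, W.φ P δ = j) ∧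
  ((∃ δ : W.Δ P, W.φ P δ = i ∧ ((W.muC P δ j : ZMod p) ≠ 0)) ∨
   (∃ δ : W.Δ P, W.φ P δ = j ∧ ((W.muC P δ i : ZMod p) ≠ 0)))

/-- The components i and j are p-transversal at a point. -/
def PTransComponents (i j : W.C) : Prop := ∃ P : W.S, W.PTransPoint P i j

/-- α is non-coordinate if all its coordinates are nonzero. -/
def NonCoordinate (α : W.C → ZMod p) : Prop := ∀ i, α i ≠ 0

end WeakComb

/-- The setoid (partition) obtained from s by merging the classes of c₀ and c₁. -/
def mergeSetoid {α : Type*} (s : Setoid α) (c₀ c₁ : α) : Setoid α :=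
  Relation.EqvGen.setoid (fun a b => s.r a b ∨ (a = c₀ ∧ b = c₁))

namespace WeakComb

variable {p : ℕ} (W : WeakComb p)

/-- W is p-transversal at P with respect to (α, π), where the surjection π is encoded by the
setoid s of its fibres; the two classes π(φ_P(Δ_P)) = {i',j'} are those of c₀ and c₁. -/
def PTransversalAt (α : W.C → ZMod p) (s : Setoid W.C) (P : W.S) (c₀ c₁ : W.C) : Prop :=
  ¬ s.r c₀ c₁ ∧
  (∀ δ : W.Δ P, s.r (W.φ P δ) c₀ ∨ s.r (W.φ P δ) c₁) ∧
  (∃ δ : W.Δ P, s.r (W.φ P δ) c₀) ∧ (∃ δ : W.Δ P, s.r (W.φ P δ) c₁) ∧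
  ∃ δ : W.Δ P, s.r (W.φ P δ) c₀ ∧
    (∑ δ' : W.Δ P, if s.r (W.φ P δ') c₁
        then (W.muk P δ δ' : ZMod p) * α (W.φ P δ') else 0) ≠ 0

/-- A p-reduction step with respect to α. -/
def RedStep (α : W.C → ZMod p) (s s' : Setoid W.C) : Prop :=
  ∃ (P : W.S) (c₀ c₁ : W.C), W.PTransversalAt α s P c₀ c₁ ∧ s' = mergeSetoid s c₀ c₁

/-- W is completely p-reductive with respect to α: starting from the identity partition (⊥),
some finite sequence of p-reduction steps reaches the one-class partition (⊤). -/
def CompletelyPReductive (α : W.C → ZMod p) : Prop :=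
  Relation.ReflTransGen (W.RedStep α) ⊥ ⊤

/-- β is π-proportional to α, for the surjection π encoded by the setoid s: on each class
of s, β is a scalar multiple of α. -/
def Proportional (s : Setoid W.C) (α β : W.C → ZMod p) : Prop :=
  ∀ c : W.C, ∃ l : ZMod p, ∀ c', s.r c c' → β c' = l * α c'

end WeakComb

/-- A combinatorial quasi-fiber structure of rank r on W. -/
structure QuasiFiber {p : ℕ} (W : WeakComb p) (r : ℕ) where
  /-- which quasi-fiber each component belongs to -/
  g : W.C → Fin r
  g_surj : Function.Surjective g
  /-- multiplicities of components inside the quasi-fibers -/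
  m : W.C → ℕ
  m_pos : ∀ c, 0 < m c
  /-- the set of base points -/
  B : Set W.S
  fiber_off_base : ∀ P : W.S, P ∉ B → ∀ δ δ' : W.Δ P, g (W.φ P δ) = g (W.φ P δ')

namespace WeakComb

variable {p : ℕ} (W : WeakComb p) {r : ℕ}

/-- M_s(δ) for a branch δ at a base point P. -/
noncomputable def Mcoef (F : QuasiFiber W r) (P : W.S) (δ : W.Δ P) (s : Fin r) : ZMod p :=
  ∑ δ' : W.Δ P,
    if W.φ P δ' ≠ W.φ P δ ∧ F.g (W.φ P δ') = s
      then ((F.m (W.φ P δ') * W.μ P δ δ' : ℕ) : ZMod p) else 0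

/-- ω_a = Σ_c m_c · a_{g(c)} · σ_c ∈ A¹. -/
noncomputable def omega (F : QuasiFiber W r) (a : Fin r → ZMod p) : W.C → ZMod p :=
  fun c => (F.m c : ZMod p) * a (F.g c)

/-- The restricted combinatorics W°_s of the quasi-fiber s. -/
noncomputable def restrict (F : QuasiFiber W r) (s : Fin r) : WeakComb p where
  C := {c : W.C // F.g c = s}
  fintypeC := Fintype.ofFinite _
  decEqC := inferInstance
  nonemptyC := by obtain ⟨c, hc⟩ := F.g_surj s; exact ⟨⟨c, hc⟩⟩
  S := {P : W.S // Nonempty (W.Δ P) ∧ ∀ δ : W.Δ P, F.g (W.φ P δ) = s}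
  fintypeS := Fintype.ofFinite _
  decEqS := inferInstance
  Δ := fun P => W.Δ P.1
  fintypeΔ := fun P => inferInstance
  decEqΔ := fun P => inferInstance
  φ := fun P δ => ⟨W.φ P.1 δ, P.2.2 δ⟩
  μ := fun P δ δ' => W.μ P.1 δ δ'
  μ_symm := fun P δ δ' h => W.μ_symm P.1 δ δ' (fun e => h (Subtype.ext e))
  μ_pos := fun P δ δ' h => W.μ_pos P.1 δ δ' (fun e => h (Subtype.ext e))

/-- The restriction ω_a|_s of ω_a to the restricted combinatorics W°_s. -/
noncomputable def omegaRes (F : QuasiFiber W r) (a : Fin r → ZMod p) (s : Fin r) :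
    (W.restrict F s).C → ZMod p :=
  fun c => (F.m c.1 : ZMod p) * a s

end WeakComb

section Helpers

namespace WeakComb

variable {p : ℕ} (W : WeakComb p)

/-! ### The degree-two relations and the kernel of the wedge map -/

lemma muk_comm (P : W.S) (δ δ' : W.Δ P) : W.muk P δ δ' = W.muk P δ' δ := by
  unfold muk
  by_cases h : W.φ P δ = W.φ P δ'
  · rw [if_pos h, if_pos h.symm]
  · rw [if_neg h, if_neg (Ne.symm h), W.μ_symm P δ δ' h]

/-- The alternating form `(u, v) ↦ ε(v) u - ε(u) v` on `A_P`, where `ε` is the sum of the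
coordinates. It sends `(ψ^δ, ψ^δ')` to `ψ^δ - ψ^δ'`, so it induces the Koszul boundary on `Λ² A_P`. -/
noncomputable def bdryAlt (P : W.S) :
    (W.Δ P → ZMod p) [⋀^Fin 2]→ₗ[ZMod p] (W.Δ P → ZMod p) where
  toFun v := (∑ x, v 1 x) • v 0 - (∑ x, v 0 x) • v 1
  map_update_add' v i x y := by
    have : ∀ (h : DecidableEq (Fin 2)), h = instDecidableEqFin 2 := fun h => Subsingleton.elim _ _
    rename_i inst
    obtain rfl := this inst
    fin_cases i <;> funext z <;>
      simp [Finset.sum_add_distrib] <;> ring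
  map_update_smul' v i c x := by
    have : ∀ (h : DecidableEq (Fin 2)), h = instDecidableEqFin 2 := fun h => Subsingleton.elim _ _
    rename_i inst
    obtain rfl := this inst
    fin_cases i <;> funext z <;>
      simp [← Finset.mul_sum] <;> ring
  map_eq_zero_of_eq' v i j h hij := by
    have h01 : v 0 = v 1 := by
      fin_cases i <;> fin_cases j <;> simp_all
    simp [h01]

/-- The Koszul boundary `Λ² A_P → A_P`, `ψ^δ ∧ ψ^δ' ↦ ψ^δ - ψ^δ'`. -/
noncomputable def bdry (P : W.S) :
    ⋀[ZMod p]^2 (W.Δ P → ZMod p) →ₗ[ZMod p] (W.Δ P → ZMod p) :=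
  exteriorPower.alternatingMapLinearEquiv (W.bdryAlt P)

lemma bdry_psiW (P : W.S) (δ δ' : W.Δ P) :
    W.bdry P (W.psiW P δ δ') = W.psi P δ - W.psi P δ' := by
  have h : W.psiW P δ δ' = exteriorPower.ιMulti (ZMod p) 2 ![W.psi P δ, W.psi P δ'] := by
    apply Subtype.ext
    simp [psiW]
  rw [h, bdry, exteriorPower.alternatingMapLinearEquiv_apply_ιMulti]
  simp [bdryAlt, psi]

/-- When `P` carries at least two components, a combination of the classes `ψ^δ ∧ ψ^δ'` vanishes
in `Λ² A_P / I_P` exactly when its Koszul boundary vanishes. -/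
lemma sum_mk_psiW_eq_zero_iff (P : W.S) (hP : ¬ ∀ δ δ' : W.Δ P, W.φ P δ = W.φ P δ')
    (c : W.Δ P → W.Δ P → ZMod p) :
    (∑ δ, ∑ δ', c δ δ' •
      (Submodule.Quotient.mk (W.psiW P δ δ') : _ ⧸ W.IP P)) = 0 ↔
    ∀ δ, ∑ δ', (c δ δ' - c δ' δ) = 0 := by
  constructor
  · intro h
    have hle : W.IP P ≤ LinearMap.ker (W.bdry P) := by
      rw [IP, Submodule.span_le]
      rintro x (⟨δ1, δ2, δ3, rfl⟩ | ⟨h, -⟩)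
      · simp [bdry_psiW]
      · exact absurd h hP
    have h2 := congrArg ((W.IP P).liftQ (W.bdry P) hle) h
    simp only [map_sum, map_smul, Submodule.liftQ_apply, map_zero, bdry_psiW] at h2
    intro δ
    have h3 := congrFun h2 δ
    simp only [Finset.sum_apply, Pi.smul_apply, Pi.sub_apply, psi, smul_eq_mul, mul_sub,
      Finset.sum_sub_distrib, Pi.single_apply, mul_ite, mul_one, mul_zero, Pi.zero_apply] at h3
    rw [Finset.sum_sub_distrib, ← h3]
    congr 1
    · rw [Finset.sum_comm]
      simp
    · simp
  · intro h
    by_cases hne : Nonempty (W.Δ P)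
    swap
    · have := not_nonempty_iff.mp hne
      simp
    obtain ⟨δ0⟩ := hne
    -- modulo `I_P`, every `ψ^δ ∧ ψ^δ'` is a difference of classes based at `δ0`
    have key : ∀ δ δ', (Submodule.Quotient.mk (W.psiW P δ δ') : _ ⧸ W.IP P)
        = Submodule.Quotient.mk (W.psiW P δ δ0) - Submodule.Quotient.mk (W.psiW P δ' δ0) := by
      have cyc : ∀ δ1 δ2 δ3, (Submodule.Quotient.mk (W.psiW P δ1 δ2) : _ ⧸ W.IP P)
          + Submodule.Quotient.mk (W.psiW P δ2 δ3)
          + Submodule.Quotient.mk (W.psiW P δ3 δ1) = 0 := by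
        intro δ1 δ2 δ3
        rw [← Submodule.Quotient.mk_add, ← Submodule.Quotient.mk_add,
          Submodule.Quotient.mk_eq_zero]
        exact Submodule.subset_span (Or.inl ⟨δ1, δ2, δ3, rfl⟩)
      have diag : ∀ δ, W.psiW P δ δ = 0 := by
        intro δ
        apply Subtype.ext
        exact (ExteriorAlgebra.ιMulti (ZMod p) 2).map_eq_zero_of_eq _
          (i := 0) (j := 1) (by simp) (by simp)
      have anti : ∀ δ, (Submodule.Quotient.mk (W.psiW P δ0 δ) : _ ⧸ W.IP P)
          = - Submodule.Quotient.mk (W.psiW P δ δ0) := by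
        intro δ
        have := cyc δ0 δ δ
        rw [diag, Submodule.Quotient.mk_zero, add_zero] at this
        exact eq_neg_of_add_eq_zero_left this
      intro δ δ'
      have := cyc δ δ' δ0
      rw [anti δ] at this
      rw [← sub_eq_zero, ← this]
      abel
    obtain ⟨e, he⟩ : ∃ e : W.Δ P → _ ⧸ W.IP P, ∀ δ δ',
        (Submodule.Quotient.mk (W.psiW P δ δ') : _ ⧸ W.IP P) = e δ - e δ' := ⟨_, key⟩
    simp_rw [he, smul_sub, Finset.sum_sub_distrib]
    rw [Finset.sum_comm (f := fun δ δ' => c δ δ' • e δ'), ← Finset.sum_sub_distrib]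
    refine Finset.sum_eq_zero fun δ _ => ?_
    rw [← Finset.sum_smul, ← Finset.sum_smul, ← sub_smul, ← Finset.sum_sub_distrib, h δ, zero_smul]

/-- The resonance expression of the pair `(α, β)` at the branch `δ`, written as a sum over
branches. -/
noncomputable def res (α β : W.C → ZMod p) (P : W.S) (δ : W.Δ P) : ZMod p :=
  ∑ δ' : W.Δ P, (W.muk P δ δ' : ZMod p) *
    (β (W.φ P δ) * α (W.φ P δ') - α (W.φ P δ) * β (W.φ P δ'))

lemma wedge_fst_eq_zero_iff (d : W.C → ℕ) (α β : W.C → ZMod p) (P : W.S) :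
    (W.wedge d β α).1 P = 0 ↔ ∀ δ, W.res α β P δ = 0 := by
  by_cases hP : ∀ δ δ' : W.Δ P, W.φ P δ = W.φ P δ'
  · have h0 : ∀ δ δ', W.muk P δ δ' = 0 := fun δ δ' => by simp [muk, hP δ δ']
    simp [wedge, res, h0]
  · unfold wedge
    rw [W.sum_mk_psiW_eq_zero_iff P hP]
    refine forall_congr' fun δ => ?_
    rw [res]
    have : ∀ δ', β (W.φ P δ) * α (W.φ P δ') * (W.muk P δ δ' : ZMod p)
        - β (W.φ P δ') * α (W.φ P δ) * (W.muk P δ' δ : ZMod p)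
        = (W.muk P δ δ' : ZMod p) *
          (β (W.φ P δ) * α (W.φ P δ') - α (W.φ P δ) * β (W.φ P δ')) := by
      intro δ'
      rw [W.muk_comm P δ' δ]
      ring
    simp only [this]

lemma mem_wedgeKer_iff (d : W.C → ℕ) (α β : W.C → ZMod p) :
    β ∈ W.wedgeKer d α ↔ (∀ P δ, W.res α β P δ = 0) ∧
      ∀ i, p ∣ d i → β i * (∑ j, (d j : ZMod p) * α j) - α i * (∑ j, (d j : ZMod p) * β j) = 0 := by
  rw [wedgeKer, LinearMap.mem_ker]
  change W.wedge d β α = 0 ↔ _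
  rw [Prod.ext_iff, funext_iff, funext_iff]
  refine and_congr (forall_congr' fun P => W.wedge_fst_eq_zero_iff d α β P) ?_
  exact ⟨fun h i hi => h ⟨i, hi⟩, fun h i => h i.1 i.2⟩

/-! ### Reduction steps -/

/-- Each reduction step forces the ratio `β / α` to agree on the two merged classes, so the ratio
is constant on the classes of every partition reached by reduction steps. -/
lemma le_ker_of_reduction [Fact p.Prime] (α β : W.C → ZMod p) (hα : ∀ c, α c ≠ 0)
    (hres : ∀ P δ, W.res α β P δ = 0) (s : Setoid W.C)
    (h : Relation.ReflTransGen (W.RedStep α) ⊥ s) :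
    s ≤ Setoid.ker (fun c => β c / α c) := by
  induction h with
  | refl => exact bot_le
  | @tail s s' _ hstep ih =>
    obtain ⟨P, c₀, c₁, ⟨-, hall, -, -, δ, hδ, hne⟩, rfl⟩ := hstep
    have ratio : ∀ c c', s.r c c' → β c / α c = β c' / α c' := fun c c' h => ih h
    have heq : β c₀ / α c₀ = β c₁ / α c₁ := by
      have hform : ∀ c l, β c / α c = l → β c = l * α c := by
        rintro c l rfl
        rw [div_mul_cancel₀ _ (hα c)]
      have e := hres P δ
      have : W.res α β P δ = α (W.φ P δ) * (β c₀ / α c₀ - β c₁ / α c₁) *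
          (∑ δ' : W.Δ P, if s.r (W.φ P δ') c₁
            then (W.muk P δ δ' : ZMod p) * α (W.φ P δ') else 0) := by
        rw [res, Finset.mul_sum]
        refine Finset.sum_congr rfl fun δ' _ => ?_
        rw [hform _ _ (ratio _ _ hδ)]
        split_ifs with h1
        · rw [hform _ _ (ratio _ _ h1)]
          ring
        · rw [hform _ _ (ratio _ _ ((hall δ').resolve_right h1))]
          ring
      rw [this] at e
      have := (mul_eq_zero.mp e).resolve_right hne
      exact sub_eq_zero.mp ((mul_eq_zero.mp this).resolve_left (hα _))
    refine Setoid.eqvGen_le ?_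
    rintro x y (hxy | ⟨rfl, rfl⟩)
    · exact ih hxy
    · exact heq

/-! ### Resonance of the forms `ω_b` -/

variable {r : ℕ} (F : QuasiFiber W r)

/-- The map `b ↦ ω_b` as a linear map. -/
noncomputable def omegaL : (Fin r → ZMod p) →ₗ[ZMod p] (W.C → ZMod p) where
  toFun b := W.omega F b
  map_add' b b' := by funext c; simp [omega, mul_add]
  map_smul' x b := by funext c; simp [omega]; ring

lemma m_ne_zero (hm : ∀ c : W.C, ¬ p ∣ F.m c) (c : W.C) : (F.m c : ZMod p) ≠ 0 :=
  fun h => hm c ((ZMod.natCast_eq_zero_iff _ _).mp h)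

lemma omegaL_injective [Fact p.Prime] (hm : ∀ c : W.C, ¬ p ∣ F.m c) :
    Function.Injective (W.omegaL F) := by
  intro b b' h
  funext s
  obtain ⟨c, rfl⟩ := F.g_surj s
  exact mul_left_cancel₀ (W.m_ne_zero F hm c) (congrFun h c)

lemma sum_muk_eq (P : W.S) (δ : W.Δ P) (f : Fin r → ZMod p) :
    (∑ δ', (W.muk P δ δ' : ZMod p) * ((F.m (W.φ P δ') : ZMod p) * f (F.g (W.φ P δ'))))
      = ∑ s, W.Mcoef F P δ s * f s := by
  simp_rw [Mcoef, Finset.sum_mul]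
  rw [Finset.sum_comm]
  refine Finset.sum_congr rfl fun δ' _ => ?_
  rw [Finset.sum_eq_single (F.g (W.φ P δ'))]
  · by_cases h : W.φ P δ = W.φ P δ'
    · simp [muk, h]
    · have h' : W.φ P δ' ≠ W.φ P δ := Ne.symm h
      simp [muk, h, h']
      ring
  · intro s _ hs
    simp [Ne.symm hs]
  · simp

/-- For `a` of sum zero, the resonance expression of `(ω_a, ω_b)` at a branch is, up to the factor
`-m a`, the product of the common multiplicity `μ_δ` and `Σ b`. -/
lemma res_omega (a b : Fin r → ZMod p) (hsum : ∑ s, a s = 0) (P : W.S) (δ : W.Δ P) (u : ZMod p)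
    (hu : ∀ s, s ≠ F.g (W.φ P δ) → W.Mcoef F P δ s = u) :
    W.res (W.omega F a) (W.omega F b) P δ
      = -((F.m (W.φ P δ) : ZMod p) * a (F.g (W.φ P δ)) * u * ∑ s, b s) := by
  set t := F.g (W.φ P δ) with ht
  have h1 : W.res (W.omega F a) (W.omega F b) P δ
      = (F.m (W.φ P δ) : ZMod p) * ∑ s, W.Mcoef F P δ s * (b t * a s - a t * b s) := by
    rw [← W.sum_muk_eq F P δ (fun s => b t * a s - a t * b s), Finset.mul_sum, res]
    refine Finset.sum_congr rfl fun δ' _ => ?_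
    simp only [omega, ← ht]
    ring
  have h2 : ∑ s, W.Mcoef F P δ s * (b t * a s - a t * b s)
      = ∑ s, u * (b t * a s - a t * b s) := by
    refine Finset.sum_congr rfl fun s _ => ?_
    by_cases hs : s = t
    · subst hs
      ring
    · rw [hu s hs]
  rw [h1, h2, ← Finset.mul_sum, Finset.sum_sub_distrib, ← Finset.mul_sum, ← Finset.mul_sum, hsum]
  ring

lemma Mcoef_off_base (P : W.S) (hP : P ∉ F.B) (δ : W.Δ P) (s : Fin r)
    (hs : s ≠ F.g (W.φ P δ)) : W.Mcoef F P δ s = 0 := by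
  refine Finset.sum_eq_zero fun δ' _ => ?_
  rw [if_neg]
  rintro ⟨-, h⟩
  exact hs (by rw [← h, F.fiber_off_base P hP δ' δ])

/-- Every resonant partner of `ω_a` is some `ω_b`, by complete reductivity of the fibers. -/
lemma exists_omega_eq [Fact p.Prime] (hm : ∀ c : W.C, ¬ p ∣ F.m c)
    (a : Fin r → ZMod p) (ha : ∀ s, a s ≠ 0)
    (hred : ∀ s : Fin r, (W.restrict F s).CompletelyPReductive (W.omegaRes F a s))
    (β : W.C → ZMod p) (hres : ∀ P δ, W.res (W.omega F a) β P δ = 0) :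
    ∃ b, W.omega F b = β := by
  have hω : ∀ c, W.omega F a c ≠ 0 := fun c => mul_ne_zero (W.m_ne_zero F hm c) (ha _)
  have hratio : ∀ c c', F.g c = F.g c' → β c / W.omega F a c = β c' / W.omega F a c' := by
    intro c c' h
    have hle := (W.restrict F (F.g c')).le_ker_of_reduction (W.omegaRes F a (F.g c'))
      (fun x => β x.1) (fun x => mul_ne_zero (W.m_ne_zero F hm x.1) (ha _)) ?_ ⊤ (hred (F.g c'))
    · have hcc := @hle ⟨c, h⟩ ⟨c', rfl⟩ trivial
      have hcc' : β c / ((F.m c : ZMod p) * a (F.g c')) = β c' / ((F.m c' : ZMod p) * a (F.g c')) :=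
        hcc
      rw [omega, omega, h]
      exact hcc'
    · intro P δ
      rw [← hres P.1 δ]
      refine Finset.sum_congr rfl fun δ' _ => ?_
      have hmuk : (W.restrict F (F.g c')).muk P δ δ' = W.muk P.1 δ δ' := by
        simp [muk, restrict, Subtype.ext_iff]
      have hom : ∀ ε : (W.restrict F (F.g c')).Δ P, W.omegaRes F a (F.g c') ((W.restrict F (F.g c')).φ P ε)
          = W.omega F a (W.φ P.1 ε) := by
        intro ε
        simp [omega, omegaRes, restrict, P.2.2 ε]
      rw [hmuk, hom, hom]
      rfl
  choose σ hσ using F.g_surj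
  refine ⟨fun s => a s * (β (σ s) / W.omega F a (σ s)), funext fun c => ?_⟩
  have h1 := hratio (σ (F.g c)) c (hσ _)
  change (F.m c : ZMod p) * (a (F.g c) * (β (σ (F.g c)) / W.omega F a (σ (F.g c)))) = β c
  rw [h1, ← mul_assoc]
  exact mul_div_cancel₀ _ (hω c)

/-! ### Degrees and dimension count -/

lemma sum_deg_omega (d : W.C → ℕ) (D : ZMod p)
    (hD : ∀ s : Fin r, (∑ c : W.C, if F.g c = s then ((d c * F.m c : ℕ) : ZMod p) else 0) = D)
    (b : Fin r → ZMod p) :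
    ∑ j, (d j : ZMod p) * W.omega F b j = D * ∑ s, b s := by
  rw [Finset.mul_sum]
  have : ∀ s, D * b s = ∑ c : W.C, if F.g c = s then ((d c * F.m c : ℕ) : ZMod p) * b s else 0 := by
    intro s
    rw [← hD s, Finset.sum_mul]
    exact Finset.sum_congr rfl fun c _ => by split_ifs <;> simp
  simp_rw [this]
  rw [Finset.sum_comm]
  refine Finset.sum_congr rfl fun c _ => ?_
  simp [omega]
  ring

/-- Bezout: if all the multiplicities `M_s(δ)` vanish mod `p`, then `d_i D = 0` for every component,
as seen by intersecting `i` with a fiber not containing it. -/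
lemma deg_mul_eq_zero (d : W.C → ℕ) (hd : W.IsDegree d) (D : ZMod p)
    (hD : ∀ s : Fin r, (∑ c : W.C, if F.g c = s then ((d c * F.m c : ℕ) : ZMod p) else 0) = D)
    (hM0 : ∀ P, ∀ δ : W.Δ P, ∀ s, s ≠ F.g (W.φ P δ) → W.Mcoef F P δ s = 0)
    (i : W.C) (s : Fin r) (hs : s ≠ F.g i) : (d i : ZMod p) * D = 0 := by
  rw [← hD s, Finset.mul_sum]
  have hb : ∀ c, ((d i : ZMod p) * if F.g c = s then ((d c * F.m c : ℕ) : ZMod p) else 0)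
      = ∑ P : W.S, ∑ δ : W.Δ P, if W.φ P δ = i then
          (if F.g c = s then (F.m c : ZMod p) * (W.muC P δ c : ZMod p) else 0) else 0 := by
    intro c
    by_cases hc : F.g c = s
    · have hic : i ≠ c := by rintro rfl; exact hs hc.symm
      have h := congrArg (fun n : ℕ => (n : ZMod p)) (hd.2 i c hic)
      simp only [Nat.cast_mul, Nat.cast_sum, Nat.cast_ite, Nat.cast_zero] at h
      simp only [hc, if_true, Nat.cast_mul]
      rw [← mul_assoc, h, mul_comm, Finset.mul_sum]
      refine Finset.sum_congr rfl fun P _ => ?_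
      rw [Finset.mul_sum]
      refine Finset.sum_congr rfl fun δ _ => ?_
      split_ifs <;> simp
    · simp [hc]
  simp_rw [hb]
  rw [Finset.sum_comm]
  refine Finset.sum_eq_zero fun P _ => ?_
  rw [Finset.sum_comm]
  refine Finset.sum_eq_zero fun δ _ => ?_
  by_cases hδ : W.φ P δ = i
  · simp only [hδ, if_true]
    refine Eq.trans ?_ (hM0 P δ s (by rw [hδ]; exact hs))
    have h := W.sum_muk_eq F P δ (fun t => if t = s then 1 else 0)
    simp only [mul_ite, mul_one, mul_zero, Finset.sum_ite_eq', Finset.mem_univ, if_true] at h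
    rw [← h]
    simp only [muC, Nat.cast_sum, Nat.cast_ite, Nat.cast_zero, Finset.mul_sum]
    have hsw : ∀ c, (if F.g c = s then ∑ δ' : W.Δ P, (F.m c : ZMod p) *
          (if W.φ P δ' = c then (W.muk P δ δ' : ZMod p) else 0) else 0)
        = ∑ δ' : W.Δ P, if W.φ P δ' = c then
          (if F.g c = s then (W.muk P δ δ' : ZMod p) * (F.m c : ZMod p) else 0) else 0 := by
      intro c
      split_ifs
      · exact Finset.sum_congr rfl fun δ' _ => by split_ifs <;> ring
      · simp
    simp_rw [hsw]
    rw [Finset.sum_comm]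
    refine Finset.sum_congr rfl fun δ' _ => ?_
    simp
  · simp [hδ]

lemma finrank_H1 [Fact p.Prime] (d : W.C → ℕ) (α : W.C → ZMod p) (hα : α ≠ 0)
    (hmem : α ∈ W.wedgeKer d α) :
    Module.finrank (ZMod p) (W.H1 d α) = Module.finrank (ZMod p) (W.wedgeKer d α) - 1 := by
  have h1 := Submodule.finrank_quotient_add_finrank
    (Submodule.comap (W.wedgeKer d α).subtype (Submodule.span (ZMod p) {α}))
  have hle : Submodule.span (ZMod p) {α} ≤ W.wedgeKer d α := by
    rw [Submodule.span_le]
    simpa using hmem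
  rw [(Submodule.comapSubtypeEquivOfLe hle).finrank_eq, finrank_span_singleton hα] at h1
  exact Nat.eq_sub_of_add_eq h1

end WeakComb

end Helpers

section Statements

open WeakComb

variable {p : ℕ} [Fact p.Prime]

/-- Theorem `p.index`, main statement. -/
theorem stmt13 (W : WeakComb p) (d : W.C → ℕ) (hd : W.IsDegree d)
    {r : ℕ} (F : QuasiFiber W r)
    (hm : ∀ c : W.C, ¬ p ∣ F.m c)
    (hM : ∀ P ∈ F.B, ∀ δ : W.Δ P, ∃ μδ : ZMod p,
      ∀ s : Fin r, s ≠ F.g (W.φ P δ) → W.Mcoef F P δ s = μδ)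
    (hD : ∃ D : ZMod p, ∀ s : Fin r,
      (∑ c : W.C, if F.g c = s then ((d c * F.m c : ℕ) : ZMod p) else 0) = D)
    (a : Fin r → ZMod p) (ha : ∀ s, a s ≠ 0) (hsum : (∑ s, a s) = 0)
    (hred : ∀ s : Fin r,
      (W.restrict F s).CompletelyPReductive (W.omegaRes F a s)) :
    ((∀ P ∈ F.B, ∀ δ : W.Δ P, ∀ s : Fin r,
        s ≠ F.g (W.φ P δ) → W.Mcoef F P δ s = 0) →
      Module.finrank (ZMod p) (W.H1 d (W.omega F a)) = r - 1) ∧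
    (¬ (∀ P ∈ F.B, ∀ δ : W.Δ P, ∀ s : Fin r,
        s ≠ F.g (W.φ P δ) → W.Mcoef F P δ s = 0) →
      Module.finrank (ZMod p) (W.H1 d (W.omega F a)) = r - 2) := by
  obtain ⟨D, hD⟩ := hD
  -- off the base points all `M_s(δ)` with `s ≠ g(φ(δ))` vanish, so `hM` extends to all points
  have hM' : ∀ P, ∀ δ : W.Δ P, ∃ μδ : ZMod p,
      ∀ s : Fin r, s ≠ F.g (W.φ P δ) → W.Mcoef F P δ s = μδ := fun P δ => by
    by_cases hP : P ∈ F.B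
    · exact hM P hP δ
    · exact ⟨0, W.Mcoef_off_base F P hP δ⟩
  choose u hu using hM'
  have hker : ∀ b, W.omega F b ∈ W.wedgeKer d (W.omega F a) ↔
      (∀ P δ, u P δ * ∑ s, b s = 0) ∧ ∀ i, p ∣ d i → D * ∑ s, b s = 0 := by
    intro b
    rw [W.mem_wedgeKer_iff]
    refine and_congr (forall_congr' fun P => forall_congr' fun δ => ?_)
      (forall_congr' fun i => imp_congr_right fun _ => ?_)
    · rw [W.res_omega F a b hsum P δ (u P δ) (hu P δ)]
      simp [W.m_ne_zero F hm, ha]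
    · rw [W.sum_deg_omega F d D hD, W.sum_deg_omega F d D hD, hsum]
      simp [omega, W.m_ne_zero F hm, ha]
  have hex : ∀ β ∈ W.wedgeKer d (W.omega F a), ∃ b, W.omega F b = β := fun β hβ =>
    W.exists_omega_eq F hm a ha hred β ((W.mem_wedgeKer_iff d _ _).mp hβ).1
  have hmem : W.omega F a ∈ W.wedgeKer d (W.omega F a) := (hker a).mpr (by simp [hsum])
  obtain ⟨c₀⟩ := W.nonemptyC
  have hne : W.omega F a ≠ 0 := fun h =>
    mul_ne_zero (W.m_ne_zero F hm c₀) (ha (F.g c₀)) (congrFun h c₀)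
  rw [W.finrank_H1 d _ hne hmem]
  have hinj := W.omegaL_injective F hm
  constructor
  · intro h0
    have hM0 : ∀ P, ∀ δ : W.Δ P, ∀ s, s ≠ F.g (W.φ P δ) → W.Mcoef F P δ s = 0 := by
      intro P δ
      by_cases hP : P ∈ F.B
      · exact h0 P hP δ
      · exact W.Mcoef_off_base F P hP δ
    -- `r ≥ 2`, since the nonzero entries of `a` sum to zero
    have hother : ∀ t : Fin r, ∃ s, s ≠ t := by
      intro t
      by_contra! h
      rw [Fintype.sum_eq_single t (fun s hs => absurd (h s) hs)] at hsum
      exact ha t hsum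
    have hu0 : ∀ P δ, u P δ = 0 := by
      intro P δ
      obtain ⟨s, hs⟩ := hother (F.g (W.φ P δ))
      rw [← hu P δ s hs, hM0 P δ s hs]
    have hD0 : D = 0 := by
      by_cases hall : ∀ i, (d i : ZMod p) = 0
      · rw [← hD (F.g c₀)]
        exact Finset.sum_eq_zero fun c _ => by simp [hall c]
      · push Not at hall
        obtain ⟨i, hi⟩ := hall
        obtain ⟨s, hs⟩ := hother (F.g i)
        exact (mul_eq_zero.mp (W.deg_mul_eq_zero F d hd D hD hM0 i s hs)).resolve_left hi
    have hK : W.wedgeKer d (W.omega F a) = LinearMap.range (W.omegaL F) := by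
      ext β
      constructor
      · exact fun hβ => hex β hβ
      · rintro ⟨b, rfl⟩
        exact (hker b).mpr (by simp [hu0, hD0])
    rw [hK, LinearMap.finrank_range_of_inj hinj]
    simp
  · intro h1
    push Not at h1
    obtain ⟨P, -, δ, s, hs, hns⟩ := h1
    rw [hu P δ s hs] at hns
    let ε : (Fin r → ZMod p) →ₗ[ZMod p] ZMod p := ∑ t, LinearMap.proj t
    have hε : ∀ b, ε b = ∑ t, b t := fun b => by simp [ε]
    have hK : W.wedgeKer d (W.omega F a) = (LinearMap.ker ε).map (W.omegaL F) := by
      ext β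
      constructor
      · intro hβ
        obtain ⟨b, rfl⟩ := hex β hβ
        refine ⟨b, ?_, rfl⟩
        rw [SetLike.mem_coe, LinearMap.mem_ker, hε]
        exact (mul_eq_zero.mp (((hker b).mp hβ).1 P δ)).resolve_left hns
      · rintro ⟨b, hb, rfl⟩
        rw [SetLike.mem_coe, LinearMap.mem_ker, hε] at hb
        exact (hker b).mpr (by simp [hb])
    have hsurj : LinearMap.range ε = ⊤ := by
      rw [LinearMap.range_eq_top]
      intro x
      exact ⟨Pi.single s x, by simp [hε]⟩
    have hrk := LinearMap.finrank_range_add_finrank_ker ε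
    rw [hsurj, finrank_top, Module.finrank_self, Module.finrank_fin_fun] at hrk
    rw [hK, ← (Submodule.equivMapOfInjective (W.omegaL F) hinj (LinearMap.ker ε)).finrank_eq]
    omega

end Statements
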